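/- Intersection of two planes in a 3D projective incidence space. Let rk be a rank function satisfying (A1)–(A4), the 3D upper-dimension axiom (A9): rk X ≤ 4 for every finite set X, and the 3D line–plane intersection axiom (A10). Let A, B, C, A', B', C' be points with rk{A,B,C} = 3, rk{A',B',C'} = 3 and rk{A,B,C,A',B',C'} = 4 (two distinct planes). Then there exist points M and N with rk{M,N} = 2, rk{A,B,C,M} = 3, rk{A',B',C',M} = 3, rk{A,B,C,N} = 3, rk{A',B',C',N} = 3, and such that for every point P one has rk{M,N,P} ≤ 2 if and only if rk{A,B,C,P} = 3 and rk{A',B',C',P} = 3; that is, the intersection of the two planes is exactly the line through M and N. -/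

import Mathlib

/-!
If `p` is a point of `Y` outside a flat `H` that meets every line, projecting `Y` from `p` into `H`
gives a set `Z` of common points of `H` and the flat of `Y` that, together with `p`, spans `Y`; so
`rk Z ≥ rk Y - 1`. Submodularity bounds the rank of any set of common points of the two flats by the
same number, so `Z` spans their intersection.
-/

/-- The rank functions of incidence geometry, axioms (A1)–(A4): rank functions of matroids without
loops, given on finite sets. Distinct points may be parallel, i.e. span a set of rank one. -/
structure IsRankFunction {P : Type*} [DecidableEq P] (rk : Finset P → ℕ) : Prop where
  le_card (X : Finset P) : rk X ≤ X.card
  mono {X Y : Finset P} : X ⊆ Y → rk X ≤ rk Y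
  submodular (X Y : Finset P) : rk (X ∪ Y) + rk (X ∩ Y) ≤ rk X + rk Y
  singleton (p : P) : rk {p} = 1

/-- The flat spanned by `X`: the points whose adjunction does not raise the rank. For `X` of rank
two or three these are the points of a line or a plane. -/
def flatSpan {P : Type*} [DecidableEq P] (rk : Finset P → ℕ) (X : Finset P) : Set P :=
  {p | rk (X ∪ {p}) = rk X}

/-- The flat of `X` meets every line, as hyperplanes of projective spaces do. -/
def MeetsEveryLine {P : Type*} [DecidableEq P] (rk : Finset P → ℕ) (X : Finset P) : Prop :=
  ∀ a b, rk {a, b} = 2 → (flatSpan rk X ∩ flatSpan rk {a, b}).Nonempty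

theorem mem_flatSpan_triple {P : Type*} [DecidableEq P] {rk : Finset P → ℕ} {n : ℕ} {a b c p : P}
    (habc : rk {a, b, c} = n) : p ∈ flatSpan rk {a, b, c} ↔ rk {a, b, c, p} = n := by
  simp only [flatSpan, Set.mem_ofPred_eq, Finset.insert_union, Finset.singleton_union, habc]

namespace IsRankFunction

variable {P : Type*} [DecidableEq P] {rk : Finset P → ℕ} {p q : P} {S T X Y Z : Finset P}

theorem rank_union_add_rank_le_of_subset (h : IsRankFunction rk) (hS : Z ⊆ S) (hT : Z ⊆ T) :
    rk (S ∪ T) + rk Z ≤ rk S + rk T :=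
  (Nat.add_le_add_left (h.mono (Finset.subset_inter hS hT)) _).trans (h.submodular S T)

theorem rank_union_singleton_le (h : IsRankFunction rk) (X : Finset P) (p : P) :
    rk (X ∪ {p}) ≤ rk X + 1 := by
  have := h.submodular X {p}
  have := h.singleton p
  omega

theorem rank_pair_le (h : IsRankFunction rk) (p q : P) : rk {p, q} ≤ 2 :=
  (h.le_card _).trans Finset.card_le_two

theorem mem_flatSpan_iff_le (h : IsRankFunction rk) :
    p ∈ flatSpan rk X ↔ rk (X ∪ {p}) ≤ rk X :=
  ⟨le_of_eq, fun hle => hle.antisymm (h.mono Finset.subset_union_left)⟩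

theorem mem_flatSpan_pair (h : IsRankFunction rk) {n : ℕ} (hpq : rk {p, q} = n) {x : P} :
    x ∈ flatSpan rk {p, q} ↔ rk {p, q, x} ≤ n := by
  rw [h.mem_flatSpan_iff_le, hpq, Finset.insert_union, Finset.singleton_union]

theorem subset_flatSpan (h : IsRankFunction rk) (X : Finset P) : ↑X ⊆ flatSpan rk X :=
  fun _ hp => h.mem_flatSpan_iff_le.2
    (h.mono (Finset.union_subset subset_rfl (Finset.singleton_subset_iff.2 hp)))

theorem rank_union_eq_of_subset_flatSpan (h : IsRankFunction rk) (hY : ↑Y ⊆ flatSpan rk X) :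
    rk (X ∪ Y) = rk X := by
  induction Y using Finset.induction_on with
  | empty => rw [Finset.union_empty]
  | insert y Y _ ih =>
    rw [Finset.coe_insert, Set.insert_subset_iff] at hY
    have hsub := h.rank_union_add_rank_le_of_subset (Z := X) (S := X ∪ Y) (T := X ∪ {y})
      Finset.subset_union_left Finset.subset_union_left
    have hunion : X ∪ Y ∪ (X ∪ {y}) = X ∪ insert y Y := by grind
    have hy : rk (X ∪ {y}) = rk X := hY.1
    rw [hunion, ih hY.2, hy] at hsub
    exact (Nat.le_of_add_le_add_right hsub).antisymm (h.mono Finset.subset_union_left)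

theorem rank_le_of_subset_flatSpan (h : IsRankFunction rk) (hY : ↑Y ⊆ flatSpan rk X) :
    rk Y ≤ rk X :=
  (h.mono Finset.subset_union_right).trans (h.rank_union_eq_of_subset_flatSpan hY).le

theorem flatSpan_subset_flatSpan (h : IsRankFunction rk) (hX : ↑X ⊆ flatSpan rk Y) :
    flatSpan rk X ⊆ flatSpan rk Y := by
  intro p hp
  have hsub := h.rank_union_add_rank_le_of_subset (Z := X) (S := Y ∪ X) (T := X ∪ {p})
    Finset.subset_union_right Finset.subset_union_left
  have hp : rk (X ∪ {p}) = rk X := hp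
  rw [h.rank_union_eq_of_subset_flatSpan hX, hp] at hsub
  have hmono : rk (Y ∪ {p}) ≤ rk (Y ∪ X ∪ (X ∪ {p})) := h.mono (by grind)
  exact h.mem_flatSpan_iff_le.2 (hmono.trans (Nat.le_of_add_le_add_right hsub))

theorem flatSpan_mono (h : IsRankFunction rk) (hXY : X ⊆ Y) : flatSpan rk X ⊆ flatSpan rk Y :=
  h.flatSpan_subset_flatSpan ((Finset.coe_subset.2 hXY).trans (h.subset_flatSpan Y))

theorem rank_union_add_rank_le_of_subset_flatSpan (h : IsRankFunction rk)
    (hS : ↑Z ⊆ flatSpan rk S) (hT : ↑Z ⊆ flatSpan rk T) :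
    rk (S ∪ T) + rk Z ≤ rk S + rk T := by
  have hsub := h.rank_union_add_rank_le_of_subset (Z := Z) (S := S ∪ Z) (T := T ∪ Z)
    Finset.subset_union_right Finset.subset_union_right
  rw [h.rank_union_eq_of_subset_flatSpan hS, h.rank_union_eq_of_subset_flatSpan hT] at hsub
  have hmono : rk (S ∪ T) ≤ rk (S ∪ Z ∪ (T ∪ Z)) := h.mono (by grind)
  omega

theorem flatSpan_eq_inter_of_rank_le (h : IsRankFunction rk)
    (hS : ↑Z ⊆ flatSpan rk S) (hT : ↑Z ⊆ flatSpan rk T)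
    (hrank : rk S + rk T ≤ rk (S ∪ T) + rk Z) :
    flatSpan rk Z = flatSpan rk S ∩ flatSpan rk T := by
  refine Set.Subset.antisymm
    (Set.subset_inter (h.flatSpan_subset_flatSpan hS) (h.flatSpan_subset_flatSpan hT)) ?_
  rintro p ⟨hpS, hpT⟩
  have hle : rk (S ∪ T) + rk (Z ∪ {p}) ≤ rk S + rk T := by
    apply h.rank_union_add_rank_le_of_subset_flatSpan <;>
      simp only [Finset.coe_union, Finset.coe_singleton, Set.union_singleton,
        Set.insert_subset_iff, *, and_self]
  exact h.mem_flatSpan_iff_le.2 (by omega)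

theorem exists_subset_rank_eq_card (h : IsRankFunction rk) (Z : Finset P) :
    ∃ I ⊆ Z, rk I = I.card ∧ rk I = rk Z := by
  suffices ∃ I ⊆ Z, rk I = I.card ∧ ↑Z ⊆ flatSpan rk I by
    obtain ⟨I, hIZ, hI, hZ⟩ := this
    exact ⟨I, hIZ, hI, (h.mono hIZ).antisymm (h.rank_le_of_subset_flatSpan hZ)⟩
  induction Z using Finset.induction_on with
  | empty => exact ⟨∅, subset_rfl, Nat.le_zero.1 (h.le_card ∅), by simp⟩
  | insert z Z _ ih =>
    obtain ⟨I, hIZ, hI, hZ⟩ := ih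
    simp only [Finset.coe_insert, Set.insert_subset_iff]
    by_cases hz : z ∈ flatSpan rk I
    · exact ⟨I, hIZ.trans (Finset.subset_insert z Z), hI, hz, hZ⟩
    · have hlt : rk I < rk (I ∪ {z}) := not_le.1 (mt h.mem_flatSpan_iff_le.2 hz)
      have hcard : (I ∪ {z}).card ≤ I.card + 1 := Finset.card_union_le I {z}
      have hle := h.le_card (I ∪ {z})
      exact ⟨I ∪ {z}, by grind, by omega, h.subset_flatSpan _ (by simp),
        hZ.trans (h.flatSpan_mono Finset.subset_union_left)⟩

theorem mem_flatSpan_singleton_of_rank_pair_ne_two (h : IsRankFunction rk)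
    (hpq : rk {p, q} ≠ 2) : q ∈ flatSpan rk {p} := by
  have hle := h.rank_pair_le p q
  have hp := h.singleton p
  exact h.mem_flatSpan_iff_le.2 (by rw [Finset.singleton_union]; omega)

theorem exists_projection_of_point (h : IsRankFunction rk)
    (hX : MeetsEveryLine rk X) (hp : p ∉ flatSpan rk X) (q : P) :
    ∃ Z : Finset P, ↑Z ⊆ flatSpan rk X ∧ ↑Z ⊆ flatSpan rk {p, q} ∧ q ∈ flatSpan rk (Z ∪ {p}) := by
  by_cases hpq : rk {p, q} = 2
  · obtain ⟨m, hmX, hm⟩ := hX p q hpq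
    have hmp : rk {m, p} = 2 := by
      by_contra hne
      exact hp (h.flatSpan_subset_flatSpan (by simpa using hmX)
        (h.mem_flatSpan_singleton_of_rank_pair_ne_two hne))
    refine ⟨{m}, by simpa using hmX, by simpa using hm, ?_⟩
    have hrank : rk ({p, q} ∪ {m}) = 2 := hm.trans hpq
    have hset : {m} ∪ {p} ∪ {q} = ({p, q} ∪ {m} : Finset P) := by grind
    exact h.mem_flatSpan_iff_le.2 (by rw [hset, hrank, Finset.singleton_union, hmp])
  · exact ⟨∅, by simp, by simp,
      by simpa using h.mem_flatSpan_singleton_of_rank_pair_ne_two hpq⟩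

theorem exists_projection (h : IsRankFunction rk)
    (hX : MeetsEveryLine rk X) (hpX : p ∉ flatSpan rk X) (hpY : p ∈ Y) :
    ∃ Z : Finset P, ↑Z ⊆ flatSpan rk X ∧ ↑Z ⊆ flatSpan rk Y ∧ ↑Y ⊆ flatSpan rk (Z ∪ {p}) := by
  choose proj hprojX hprojLine hmem using h.exists_projection_of_point hX hpX
  refine ⟨Y.biUnion proj, ?_, ?_, fun q hq => ?_⟩
  · simpa only [Finset.coe_biUnion, Set.iUnion₂_subset_iff] using fun q _ => hprojX q
  · rw [Finset.coe_biUnion, Set.iUnion₂_subset_iff]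
    exact fun q hq => (hprojLine q).trans (h.flatSpan_mono (by grind))
  · exact h.flatSpan_mono
      (Finset.union_subset_union_left (Finset.subset_biUnion_of_mem proj hq)) (hmem q)

theorem exists_indep_flatSpan_eq_inter (h : IsRankFunction rk) (hX : MeetsEveryLine rk X)
    (hYX : ¬ ↑Y ⊆ flatSpan rk X) :
    ∃ I : Finset P, rk I = I.card ∧ I.card + 1 = rk Y ∧
      flatSpan rk I = flatSpan rk X ∩ flatSpan rk Y := by
  obtain ⟨p, hpY, hpX⟩ := Set.not_subset.1 hYX
  obtain ⟨Z, hZX, hZY, hYZ⟩ := h.exists_projection hX hpX hpY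
  obtain ⟨I, hIZ, hI, hIrank⟩ := h.exists_subset_rank_eq_card Z
  have hlower : rk Y ≤ rk Z + 1 :=
    (h.rank_le_of_subset_flatSpan hYZ).trans (h.rank_union_singleton_le Z p)
  have hupper : rk (X ∪ Y) + rk Z ≤ rk X + rk Y :=
    h.rank_union_add_rank_le_of_subset_flatSpan hZX hZY
  have hXY : rk X < rk (X ∪ Y) :=
    (not_le.1 (mt h.mem_flatSpan_iff_le.2 hpX)).trans_le
      (h.mono (Finset.union_subset_union_right (Finset.singleton_subset_iff.2 hpY)))
  have hIZ : (I : Set P) ⊆ Z := Finset.coe_subset.2 hIZ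
  exact ⟨I, hI, by omega,
    h.flatSpan_eq_inter_of_rank_le (hIZ.trans hZX) (hIZ.trans hZY) (by omega)⟩

end IsRankFunction

theorem stmt_6_general {P : Type*} [DecidableEq P] {rk : Finset P → ℕ} (h : IsRankFunction rk)
    {X : Finset P} (hX : MeetsEveryLine rk X) {A B C : P} (hABC : rk {A, B, C} = 3)
    (hne : rk (X ∪ {A, B, C}) ≠ rk X) :
    ∃ M N : P, rk {M, N} = 2 ∧
      rk (X ∪ {M}) = rk X ∧ rk {A, B, C, M} = 3 ∧
      rk (X ∪ {N}) = rk X ∧ rk {A, B, C, N} = 3 ∧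
      (∀ Q : P, rk {M, N, Q} ≤ 2 ↔ rk (X ∪ {Q}) = rk X ∧ rk {A, B, C, Q} = 3) := by
  obtain ⟨I, hI, hcard, hspan⟩ :=
    h.exists_indep_flatSpan_eq_inter hX (mt h.rank_union_eq_of_subset_flatSpan hne)
  obtain ⟨M, N, -, rfl⟩ := Finset.card_eq_two.1 (show I.card = 2 by omega)
  have hMN : rk {M, N} = 2 := by omega
  have hline (Q : P) : rk {M, N, Q} ≤ 2 ↔ rk (X ∪ {Q}) = rk X ∧ rk {A, B, C, Q} = 3 := by
    rw [← h.mem_flatSpan_pair hMN, hspan, ← mem_flatSpan_triple hABC]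
    rfl
  have hM := (hline M).1 (hMN ▸ h.mono (by grind))
  have hN := (hline N).1 (hMN ▸ h.mono (by grind))
  exact ⟨M, N, hMN, hM.1, hM.2, hN.1, hN.2, hline⟩

/-- In a 3D projective incidence space, the intersection of two
distinct planes is exactly a line. -/
theorem stmt_6 {P : Type*} [DecidableEq P] (rk : Finset P → ℕ)
    (hA1 : ∀ X : Finset P, rk X ≤ X.card)
    (hA2 : ∀ X Y : Finset P, X ⊆ Y → rk X ≤ rk Y)
    (hA3 : ∀ X Y : Finset P, rk (X ∪ Y) + rk (X ∩ Y) ≤ rk X + rk Y)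
    (hA4 : ∀ p : P, rk {p} = 1)
    (hA9 : ∀ X : Finset P, rk X ≤ 4)
    (hA10 : ∀ A B C A' B' : P, rk {A, B, C} = 3 → rk {A', B'} = 2 →
      ∃ M : P, rk {A, B, C, M} = 3 ∧ rk {A', B', M} = 2)
    (A B C A' B' C' : P)
    (hABC : rk {A, B, C} = 3)
    (hA'B'C' : rk {A', B', C'} = 3)
    (hdistinct : rk {A, B, C, A', B', C'} = 4) :
    ∃ M N : P, rk {M, N} = 2 ∧
      rk {A, B, C, M} = 3 ∧ rk {A', B', C', M} = 3 ∧
      rk {A, B, C, N} = 3 ∧ rk {A', B', C', N} = 3 ∧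
      (∀ Q : P, rk {M, N, Q} ≤ 2 ↔
        rk {A, B, C, Q} = 3 ∧ rk {A', B', C', Q} = 3) := by
  have hmeets : MeetsEveryLine rk {A, B, C} := fun a b hab => by
    simpa [Set.Nonempty, flatSpan, hABC, hab] using hA10 A B C a b hABC hab
  simpa only [Finset.insert_union, Finset.singleton_union, hABC] using
    stmt_6_general ⟨hA1, hA2 _ _, hA3, hA4⟩ hmeets hA'B'C' (by
      simp only [Finset.insert_union, Finset.singleton_union, hdistinct, hABC]; decide)
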